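/- Let N ≥ 1 and Λ > 1. Let (u, v) be a classical solution of the system (P_Λ) with u ≥ 0 and v ≥ 0 on ℝ^N, satisfying condition (h∞). Then ∂_N u > 0 and ∂_N v < 0 at every point of ℝ^N. -/

import Mathlib

/-!
The proof is a sliding argument with elementary substitutes for elliptic theory. Put `w = 1 - v`;
for functions `u, w` with values in `[0, 1]` the system is cooperative, and for `τ ≥ 0` one studies
the increments `U_τ(x) = u(x + τ e_N) - u(x)` and `W_τ(x) = w(x + τ e_N) - w(x)`.

* `le_one_of_subsolution` (Keller–Osserman) gives `u, v ≤ 1`, and `exists_lipschitz` (an interior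
  gradient bound by reflection and a quadratic barrier) gives uniform Lipschitz bounds.
* Since `Λ > 1`, the states `(0, 1)` and `(1, 0)` are nondegenerate: where `x_N ≤ -M` or
  `x_N + τ ≥ M`, the smaller of `U_τ, W_τ`, if negative, satisfies `Δ ≤ δ ·` (`far_fst`, `far_snd`).
  By the whole-space maximum principle `pair_nonneg`, both increments are nonnegative as soon as
  they are so on the slab `-M < x_N < M - τ`. This slab is empty for `τ ≥ 2 M`.
* If `U_τ, W_τ ≥ 0` for some `τ > 0`, each satisfies `Δ ≤ (2 + Λ) ·` (`super_alg`). The quantitative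
  strong maximum principle `exists_propagation`, applied after telescoping the increments along the
  `x_N`-direction, bounds them below by a positive constant on the slab (`increment_pos`); by the
  Lipschitz bounds, slightly smaller steps are good too. Hence all steps `τ ≥ 0` are good.
* Applying `exists_propagation` to the difference quotients `U_τ / τ`, uniformly in `τ`, gives the
  strict sign of the derivatives (`lastDeriv_pos`), without differentiating the equation.
-/

open scoped RealInnerProductSpace
open Filter

noncomputable section

/-- The Laplacian of `f : ℝ^N → ℝ`, as the sum of the pure second partial
derivatives in the coordinate directions. -/
def lap (N : ℕ) (f : EuclideanSpace ℝ (Fin N) → ℝ) (x : EuclideanSpace ℝ (Fin N)) : ℝ :=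
  ∑ i : Fin N,
    fderiv ℝ (fun y => fderiv ℝ f y (EuclideanSpace.single i 1)) x (EuclideanSpace.single i 1)

/-- `(u, v)` is a classical solution of the system `(P_Λ)` on `ℝ^N`:
`u, v` are `C²` and `-Δu = u - u³ - Λ u v²`, `-Δv = v - v³ - Λ u² v` pointwise. -/
def IsSolution (N : ℕ) (Λ : ℝ) (u v : EuclideanSpace ℝ (Fin N) → ℝ) : Prop :=
  ContDiff ℝ 2 u ∧ ContDiff ℝ 2 v ∧
  (∀ x, -lap N u x = u x - (u x) ^ 3 - Λ * u x * (v x) ^ 2) ∧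
  (∀ x, -lap N v x = v x - (v x) ^ 3 - Λ * (u x) ^ 2 * v x)

/-- Condition `(h∞)`: `u → 1`, `v → 0` as `x_N → +∞` and `u → 0`, `v → 1` as
`x_N → -∞`, uniformly with respect to `x' ∈ ℝ^{N-1}` (the dimension is `N + 1`). -/
def Hinf (N : ℕ) (u v : EuclideanSpace ℝ (Fin (N + 1)) → ℝ) : Prop :=
  (∀ ε : ℝ, 0 < ε → ∃ M : ℝ, ∀ x : EuclideanSpace ℝ (Fin (N + 1)),
    M ≤ x (Fin.last N) → |u x - 1| < ε ∧ |v x| < ε) ∧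
  (∀ ε : ℝ, 0 < ε → ∃ M : ℝ, ∀ x : EuclideanSpace ℝ (Fin (N + 1)),
    x (Fin.last N) ≤ M → |u x| < ε ∧ |v x - 1| < ε)

/-! ### Second derivatives along lines -/

lemma hasDerivAt_line {n : ℕ} {f : EuclideanSpace ℝ (Fin n) → ℝ} (hf : ContDiff ℝ 2 f)
    (x e : EuclideanSpace ℝ (Fin n)) (t : ℝ) :
    HasDerivAt (fun s : ℝ => f (x + s • e)) (fderiv ℝ f (x + t • e) e) t := by
  have h1 : HasDerivAt (fun s : ℝ => x + s • e) e t := by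
    simpa using ((hasDerivAt_id t).smul_const e).const_add x
  exact ((hf.differentiable (by norm_num)) _).hasFDerivAt.comp_hasDerivAt t h1

lemma contDiff_dir {n : ℕ} {f : EuclideanSpace ℝ (Fin n) → ℝ} (hf : ContDiff ℝ 2 f)
    (e : EuclideanSpace ℝ (Fin n)) : ContDiff ℝ 1 (fun y => fderiv ℝ f y e) :=
  (hf.fderiv_right (m := 1) (by norm_num)).clm_apply contDiff_const

lemma hasDerivAt_line2 {n : ℕ} {f : EuclideanSpace ℝ (Fin n) → ℝ} (hf : ContDiff ℝ 2 f)
    (x e : EuclideanSpace ℝ (Fin n)) (t : ℝ) :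
    HasDerivAt (fun s : ℝ => fderiv ℝ f (x + s • e) e)
      (fderiv ℝ (fun y => fderiv ℝ f y e) (x + t • e) e) t := by
  have h1 : HasDerivAt (fun s : ℝ => x + s • e) e t := by
    simpa using ((hasDerivAt_id t).smul_const e).const_add x
  have h2 := (((contDiff_dir hf e).differentiable (by norm_num)) (x + t • e)).hasFDerivAt
  exact h2.comp_hasDerivAt t h1

lemma second_deriv_nonpos {g g' : ℝ → ℝ} {d : ℝ} (hg : ∀ t, HasDerivAt g (g' t) t)
    (hg' : HasDerivAt g' d 0) (hmax : IsLocalMax g 0) : d ≤ 0 := by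
  by_contra hd
  push Not at hd
  have h0 : g' 0 = 0 := hmax.hasDerivAt_eq_zero (hg 0)
  have hder : deriv g = g' := funext fun t => (hg t).deriv
  have hmin : IsLocalMin g 0 :=
    isLocalMin_of_deriv_deriv_pos (by rw [hder, hg'.deriv]; exact hd) (by rw [hder, h0])
      (hg 0).continuousAt
  have hconst : g =ᶠ[nhds 0] fun _ => g 0 := by
    filter_upwards [hmax, hmin] with t h1 h2 using le_antisymm h1 h2
  have h3 : deriv g =ᶠ[nhds 0] deriv (fun _ => g 0) := hconst.deriv
  have h4 := h3.deriv_eq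
  rw [hder, hg'.deriv] at h4
  simp at h4
  linarith

/-- The Laplacian can be read off from the second derivatives along the coordinate lines. -/
lemma lap_eq_of_line {n : ℕ} {f : EuclideanSpace ℝ (Fin n) → ℝ} (hf : ContDiff ℝ 2 f)
    (x : EuclideanSpace ℝ (Fin n)) (d : Fin n → ℝ) (g' : Fin n → ℝ → ℝ)
    (h1 : ∀ i t, HasDerivAt (fun s : ℝ => f (x + s • EuclideanSpace.single i (1 : ℝ))) (g' i t) t)
    (h2 : ∀ i, HasDerivAt (g' i) (d i) 0) : lap n f x = ∑ i, d i := by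
  unfold lap
  refine Finset.sum_congr rfl fun i _ => ?_
  have h3 : g' i = fun s => fderiv ℝ f (x + s • EuclideanSpace.single i (1 : ℝ))
      (EuclideanSpace.single i 1) :=
    funext fun t => (h1 i t).unique (hasDerivAt_line hf x _ t)
  have h4 := h2 i
  rw [h3] at h4
  have h5 := h4.unique (hasDerivAt_line2 hf x (EuclideanSpace.single i (1 : ℝ)) 0)
  simpa using h5.symm

lemma lap_sub {n : ℕ} {f g : EuclideanSpace ℝ (Fin n) → ℝ} (hf : ContDiff ℝ 2 f)
    (hg : ContDiff ℝ 2 g) (x : EuclideanSpace ℝ (Fin n)) :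
    lap n (fun y => f y - g y) x = lap n f x - lap n g x := by
  rw [lap_eq_of_line (hf.sub hg) x _ _
    (fun i t => (hasDerivAt_line hf x _ t).sub (hasDerivAt_line hg x _ t))
    (fun i => (hasDerivAt_line2 hf x _ 0).sub (hasDerivAt_line2 hg x _ 0))]
  simp [lap, Finset.sum_sub_distrib]

lemma lap_const_mul {n : ℕ} {f : EuclideanSpace ℝ (Fin n) → ℝ} (hf : ContDiff ℝ 2 f) (c : ℝ)
    (x : EuclideanSpace ℝ (Fin n)) :
    lap n (fun y => c * f y) x = c * lap n f x := by
  rw [lap_eq_of_line (contDiff_const.mul hf) x _ _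
    (fun i t => (hasDerivAt_line hf x _ t).const_mul c)
    (fun i => (hasDerivAt_line2 hf x _ 0).const_mul c)]
  simp [lap, Finset.mul_sum]

lemma lap_const {n : ℕ} (c : ℝ) (x : EuclideanSpace ℝ (Fin n)) : lap n (fun _ => c) x = 0 := by
  simp [lap]

lemma lap_shift {n : ℕ} (f : EuclideanSpace ℝ (Fin n) → ℝ) (a x : EuclideanSpace ℝ (Fin n)) :
    lap n (fun y => f (y + a)) x = lap n f (x + a) := by
  unfold lap
  refine Finset.sum_congr rfl fun i _ => ?_
  have : (fun y => fderiv ℝ (fun y => f (y + a)) y (EuclideanSpace.single i (1 : ℝ)))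
      = fun y => (fun z => fderiv ℝ f z (EuclideanSpace.single i (1 : ℝ))) (y + a) := by
    funext y; rw [fderiv_comp_add_right]
  rw [this]
  exact congrArg (fun L => L (EuclideanSpace.single i (1 : ℝ)))
    (fderiv_comp_add_right (𝕜 := ℝ) (f := fun z => fderiv ℝ f z (EuclideanSpace.single i (1 : ℝ))) a)

/-- Restricting a local maximum to a line. -/
lemma IsLocalMax.line {n : ℕ} {f : EuclideanSpace ℝ (Fin n) → ℝ} {x : EuclideanSpace ℝ (Fin n)}
    (h : IsLocalMax f x) (e : EuclideanSpace ℝ (Fin n)) :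
    IsLocalMax (fun s : ℝ => f (x + s • e)) 0 := by
  have hc : Tendsto (fun s : ℝ => x + s • e) (nhds 0) (nhds x) := by
    have : Continuous (fun s : ℝ => x + s • e) := by fun_prop
    simpa using this.tendsto 0
  have := hc.eventually h
  simpa [IsLocalMax, IsMaxFilter] using this

lemma lap_nonpos_of_isLocalMax {n : ℕ} {f : EuclideanSpace ℝ (Fin n) → ℝ} (hf : ContDiff ℝ 2 f)
    {x : EuclideanSpace ℝ (Fin n)} (h : IsLocalMax f x) : lap n f x ≤ 0 := by
  unfold lap
  refine Finset.sum_nonpos fun i _ => ?_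
  have := second_deriv_nonpos (fun t => hasDerivAt_line hf x (EuclideanSpace.single i (1 : ℝ)) t)
    (hasDerivAt_line2 hf x _ 0) (h.line _)
  simpa using this

lemma lap_le_of_isLocalMax {n : ℕ} {f g : EuclideanSpace ℝ (Fin n) → ℝ} (hf : ContDiff ℝ 2 f)
    (hg : ContDiff ℝ 2 g) {x : EuclideanSpace ℝ (Fin n)}
    (h : IsLocalMax (fun y => f y - g y) x) : lap n f x ≤ lap n g x := by
  have := lap_nonpos_of_isLocalMax (hf.sub hg) h
  rw [lap_sub hf hg] at this
  linarith

lemma norm_sq_line {n : ℕ} (z : EuclideanSpace ℝ (Fin n)) (i : Fin n) (t : ℝ) :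
    ‖z + t • EuclideanSpace.single i (1 : ℝ)‖ ^ 2 = ‖z‖ ^ 2 + 2 * t * z i + t ^ 2 := by
  rw [norm_add_sq_real, norm_smul, inner_smul_right, EuclideanSpace.inner_single_right]
  simp
  ring

lemma sum_sq_eq {n : ℕ} (z : EuclideanSpace ℝ (Fin n)) : ∑ i, z i ^ 2 = ‖z‖ ^ 2 := by
  rw [EuclideanSpace.norm_sq_eq]; simp

/-- The Laplacian of a radial function `G (‖x - y‖²)`. -/
lemma lap_radial {n : ℕ} {G G' G'' : ℝ → ℝ} (hC : ContDiff ℝ 2 G)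
    (h1 : ∀ s, HasDerivAt G (G' s) s) (h2 : ∀ s, HasDerivAt G' (G'' s) s)
    (x y : EuclideanSpace ℝ (Fin n)) :
    lap n (fun x => G (‖x - y‖ ^ 2)) x
      = 4 * ‖x - y‖ ^ 2 * G'' (‖x - y‖ ^ 2) + 2 * n * G' (‖x - y‖ ^ 2) := by
  set z := x - y with hz
  have hq : ∀ (i : Fin n) (t : ℝ),
      ‖x + t • EuclideanSpace.single i (1 : ℝ) - y‖ ^ 2 = ‖z‖ ^ 2 + 2 * t * z i + t ^ 2 := by
    intro i t
    rw [← norm_sq_line, hz]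
    congr 2; abel
  have hqd : ∀ (i : Fin n) (t : ℝ),
      HasDerivAt (fun t : ℝ => ‖z‖ ^ 2 + 2 * t * z i + t ^ 2) (2 * z i + 2 * t) t := by
    intro i t
    have := ((((hasDerivAt_id' t).const_mul 2).mul_const (z i)).const_add (‖z‖ ^ 2)).add
      (hasDerivAt_pow 2 t)
    exact this.congr_deriv (by norm_num)
  have hf : ContDiff ℝ 2 (fun x : EuclideanSpace ℝ (Fin n) => G (‖x - y‖ ^ 2)) :=
    hC.comp ((contDiff_id.sub contDiff_const).norm_sq ℝ)
  have hqd' : ∀ i : Fin n, HasDerivAt (fun t : ℝ => 2 * z i + 2 * t) 2 0 := by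
    intro i
    simpa using ((hasDerivAt_id (0:ℝ)).const_mul 2).const_add (2 * z i)
  rw [lap_eq_of_line hf x
    (fun i => G'' (‖z‖ ^ 2 + 2 * 0 * z i + 0 ^ 2) * (2 * z i + 2 * 0) * (2 * z i + 2 * 0)
      + G' (‖z‖ ^ 2 + 2 * 0 * z i + 0 ^ 2) * 2)
    (fun i t => G' (‖z‖ ^ 2 + 2 * t * z i + t ^ 2) * (2 * z i + 2 * t))]
  · simp only [mul_zero, zero_mul, add_zero, ne_eq, OfNat.ofNat_ne_zero, not_false_eq_true,
      zero_pow, Finset.sum_add_distrib, Finset.sum_const, Finset.card_univ, Fintype.card_fin]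
    have : ∀ i, G'' (‖z‖ ^ 2) * (2 * z i) * (2 * z i) = 4 * G'' (‖z‖ ^ 2) * z i ^ 2 := by
      intro i; ring
    simp only [this, ← Finset.mul_sum, sum_sq_eq, nsmul_eq_mul]
    ring
  · intro i t
    simp only [hq]
    exact (h1 _).comp t (hqd i t)
  · intro i
    exact ((h2 _).comp (0:ℝ) (hqd i 0)).mul (hqd' i)

lemma lap_norm_sq {n : ℕ} (x y : EuclideanSpace ℝ (Fin n)) :
    lap n (fun x => ‖x - y‖ ^ 2) x = 2 * n := by
  have := lap_radial (G := fun s => s) (G' := fun _ => 1) (G'' := fun _ => 0) contDiff_id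
    (fun s => hasDerivAt_id s) (fun s => hasDerivAt_const s 1) x y
  simpa using this

lemma contDiff_normSub_sq {n : ℕ} (y : EuclideanSpace ℝ (Fin n)) :
    ContDiff ℝ 2 (fun x : EuclideanSpace ℝ (Fin n) => ‖x - y‖ ^ 2) :=
  (contDiff_id.sub contDiff_const).norm_sq ℝ

/-! ### Maximum principle, propagation of positivity and a priori bounds -/

/-- Maximum principle on the whole space for a pair: at a point where the smaller of `U`, `V` is
negative, that function satisfies `Δ ≤ δ ·`. Boundedness from below allows the minimum to be
attained after adding a small multiple of `‖x - x₀‖²`. -/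
lemma pair_nonneg {n : ℕ} {U V : EuclideanSpace ℝ (Fin n) → ℝ} (hU : ContDiff ℝ 2 U)
    (hV : ContDiff ℝ 2 V) {B δ : ℝ} (hδ : 0 < δ) (hUB : ∀ x, -B ≤ U x) (hVB : ∀ x, -B ≤ V x)
    (h1 : ∀ x, U x < 0 → U x ≤ V x → lap n U x ≤ δ * U x)
    (h2 : ∀ x, V x < 0 → V x ≤ U x → lap n V x ≤ δ * V x) :
    ∀ x, 0 ≤ U x ∧ 0 ≤ V x := by
  intro x0
  by_contra hcon
  set μ := -min (U x0) (V x0) with hμ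
  have hμ0 : 0 < μ := by
    rw [hμ]
    by_contra hh
    push Not at hh
    exact hcon (le_min_iff.mp (by linarith))
  obtain ⟨ε, hε, hεμ⟩ : ∃ ε : ℝ, 0 < ε ∧ ε * (2 * n) < δ * μ := by
    refine ⟨δ * μ / (2 * n + 1), by positivity, ?_⟩
    rw [div_mul_eq_mul_div, div_lt_iff₀ (by positivity)]
    nlinarith [mul_pos hδ hμ0]
  set m : EuclideanSpace ℝ (Fin n) → ℝ := fun x => min (U x) (V x) + ε * ‖x - x0‖ ^ 2 with hm
  have hmc : Continuous m := by
    have := hU.continuous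
    have := hV.continuous
    fun_prop
  have hcoer : Tendsto m (cocompact _) atTop := by
    have ht : Tendsto (fun x : EuclideanSpace ℝ (Fin n) => ‖x - x0‖) (cocompact _) atTop := by
      simpa [dist_eq_norm] using tendsto_dist_right_cocompact_atTop x0
    have ht2 : Tendsto (fun x : EuclideanSpace ℝ (Fin n) => -B + ε * ‖x - x0‖ ^ 2)
        (cocompact _) atTop :=
      tendsto_atTop_add_const_left _ _
        ((tendsto_pow_atTop (by norm_num)).comp ht |>.const_mul_atTop hε)
    refine tendsto_atTop_mono (fun x => ?_) ht2
    have := le_min (hUB x) (hVB x)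
    simp only [hm]; linarith
  obtain ⟨y, hy⟩ := hmc.exists_forall_le hcoer
  have hy0 : min (U y) (V y) + ε * ‖y - x0‖ ^ 2 ≤ -μ := by
    have := hy x0
    simp only [hm, sub_self, norm_zero] at this
    rw [hμ]; linarith
  have hyμ : min (U y) (V y) ≤ -μ := by nlinarith [sq_nonneg ‖y - x0‖]
  -- Touching from below by a small downward paraboloid at `y`.
  have key : ∀ W : EuclideanSpace ℝ (Fin n) → ℝ, ContDiff ℝ 2 W →
      (∀ x, min (U x) (V x) ≤ W x) → W y = min (U y) (V y) → lap n W y ≤ δ * W y → False := by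
    intro W hW hle heq hlap
    have hmax : IsLocalMax (fun x => (-ε) * ‖x - x0‖ ^ 2 - W x) y := by
      refine Filter.Eventually.of_forall fun x => ?_
      have := hy x
      have := hle x
      simp only [hm] at *
      linarith
    have h3 := lap_le_of_isLocalMax (contDiff_const.mul (contDiff_normSub_sq x0)) hW hmax
    rw [lap_const_mul (contDiff_normSub_sq x0), lap_norm_sq] at h3
    rw [heq] at hlap
    nlinarith
  rcases le_total (U y) (V y) with h | h
  · have he := min_eq_left h
    exact key U hU (fun x => min_le_left _ _) he.symm (h1 y (by linarith) h)
  · have he := min_eq_right h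
    exact key V hV (fun x => min_le_right _ _) he.symm (h2 y (by linarith) h)

/-- Quantitative strong maximum principle: a nonnegative supersolution of `Δ W ≤ C W` that is at
least `c` on a ball of radius `ρ` is bounded below on the concentric ball of radius `R`, by a
constant independent of `W` and of the centre. The barrier is a difference of Gaussians. -/
lemma exists_propagation (n : ℕ) {C c ρ R : ℝ} (hC : 0 ≤ C) (hc : 0 < c) (hρ : 0 < ρ)
    (hR : 0 ≤ R) :
    ∃ ω : ℝ, 0 < ω ∧ ∀ W : EuclideanSpace ℝ (Fin n) → ℝ, ContDiff ℝ 2 W → (∀ x, 0 ≤ W x) →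
      (∀ x, lap n W x ≤ C * W x) → ∀ y, (∀ z, ‖z - y‖ ≤ ρ → c ≤ W z) →
      ∀ x, ‖x - y‖ ≤ R → ω ≤ W x := by
  set α : ℝ := (n + C + 1) * (1 / ρ ^ 2 + 1) with hα
  have hn : (0 : ℝ) ≤ n := n.cast_nonneg
  have hαρ : n + C + 1 ≤ α * ρ ^ 2 := by
    have : α * ρ ^ 2 = (n + C + 1) * (1 + ρ ^ 2) := by rw [hα]; field_simp
    rw [this]; nlinarith [sq_nonneg ρ]
  have hα1 : 1 ≤ α := by
    have : 0 ≤ 1 / ρ ^ 2 := by positivity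
    rw [hα]; nlinarith
  set S := R + 1 with hS
  have hRS : Real.exp (-α * S ^ 2) < Real.exp (-α * R ^ 2) := by
    apply Real.exp_lt_exp.mpr; nlinarith
  refine ⟨c * (Real.exp (-α * R ^ 2) - Real.exp (-α * S ^ 2)),
    mul_pos hc (by linarith), ?_⟩
  intro W hW hW0 hlap y hy
  set G : ℝ → ℝ := fun s => c * (Real.exp (-α * s) - Real.exp (-α * S ^ 2)) with hG
  have hGC : ContDiff ℝ 2 G := by rw [hG]; fun_prop
  have he : ∀ s, HasDerivAt (fun s => Real.exp (-α * s)) (Real.exp (-α * s) * (-α)) s := by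
    intro s
    simpa using ((hasDerivAt_id s).const_mul (-α)).exp
  set h : EuclideanSpace ℝ (Fin n) → ℝ := fun x => G (‖x - y‖ ^ 2) with hh
  have hhC : ContDiff ℝ 2 h := hGC.comp (contDiff_normSub_sq y)
  have claim : ∀ x, ‖x - y‖ ≤ S → h x ≤ W x := by
    have hcont : Continuous (fun x => h x - W x) := hhC.continuous.sub hW.continuous
    obtain ⟨z, hzS, hz⟩ := (isCompact_closedBall y S).exists_isMaxOn
      ⟨y, Metric.mem_closedBall_self (by linarith)⟩ hcont.continuousOn
    suffices hle : h z - W z ≤ 0 by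
      intro x hx
      have : h x - W x ≤ h z - W z := hz (by simpa [dist_eq_norm] using hx)
      linarith
    by_contra hpos
    push Not at hpos
    rw [Metric.mem_closedBall, dist_eq_norm] at hzS
    have hzS' : ‖z - y‖ < S := by
      refine lt_of_le_of_ne hzS fun heq => ?_
      have : h z = 0 := by simp [hh, hG, heq]
      linarith [hW0 z]
    have hzρ : ρ < ‖z - y‖ := by
      by_contra hle
      push Not at hle
      have h1 := hy z hle
      have h2 : h z ≤ c := by
        have h3 : Real.exp (-α * ‖z - y‖ ^ 2) ≤ 1 := by
          apply Real.exp_le_one_iff.mpr; nlinarith [sq_nonneg ‖z - y‖]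
        have h4 := Real.exp_pos (-α * S ^ 2)
        simp only [hh, hG]; nlinarith
      linarith
    have hloc : IsLocalMax (fun x => h x - W x) z :=
      hz.isLocalMax (Filter.mem_of_superset
        (Metric.isOpen_ball.mem_nhds (by simpa [dist_eq_norm] using hzS'))
        Metric.ball_subset_closedBall)
    have h1 := lap_le_of_isLocalMax hhC hW hloc
    have h2 : lap n h z = _ := lap_radial (G' := fun s => c * (Real.exp (-α * s) * (-α)))
      (G'' := fun s => c * (Real.exp (-α * s) * (-α) * (-α))) hGC
      (fun s => ((he s).sub_const _).const_mul c)
      (fun s => ((he s).mul_const (-α)).const_mul c) z y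
    have h3 := hlap z
    have h4 : C * W z ≤ C * h z := mul_le_mul_of_nonneg_left (by linarith) hC
    set e := Real.exp (-α * ‖z - y‖ ^ 2) with hedef
    have hepos : 0 < e := Real.exp_pos _
    have h5 : h z ≤ c * e := by
      have h4 := Real.exp_pos (-α * S ^ 2)
      simp only [hh, hG]; nlinarith
    have h6 : C * h z ≤ C * (c * e) := mul_le_mul_of_nonneg_left h5 hC
    have h7 : lap n h z = (c * e) * (α * (4 * (α * ‖z - y‖ ^ 2) - 2 * n)) := by
      rw [h2]; ring
    have h8 : C < α * (4 * (α * ‖z - y‖ ^ 2) - 2 * n) := by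
      have h9 : α * ρ ^ 2 ≤ α * ‖z - y‖ ^ 2 := by gcongr
      nlinarith
    have h9 := mul_lt_mul_of_pos_left h8 (mul_pos hc hepos)
    linarith
  intro x hx
  refine le_trans ?_ (claim x (by linarith))
  simp only [hh, hG]
  have : Real.exp (-α * R ^ 2) ≤ Real.exp (-α * ‖x - y‖ ^ 2) := by
    apply Real.exp_le_exp.mpr
    have : ‖x - y‖ ^ 2 ≤ R ^ 2 := by gcongr
    nlinarith
  nlinarith

/-- Keller–Osserman bound: a nonnegative function with `Δ u ≥ u³ - u` is at most `1`. At an interior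
maximum of `(R² - ‖x - x₀‖²) u` on the ball of radius `R` the derivative tests bound the maximum;
then `R → ∞`. -/
lemma le_one_of_subsolution {n : ℕ} {u : EuclideanSpace ℝ (Fin n) → ℝ} (hu : ContDiff ℝ 2 u)
    (h0 : ∀ x, 0 ≤ u x) (hlap : ∀ x, u x ^ 3 - u x ≤ lap n u x) : ∀ x, u x ≤ 1 := by
  intro x0
  have key : ∀ R : ℝ, 1 ≤ R → R ^ 2 * (u x0 ^ 2 - 1) ≤ 2 * n + 8 := by
    intro R hR
    have hn : (0 : ℝ) ≤ n := n.cast_nonneg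
    set η : EuclideanSpace ℝ (Fin n) → ℝ := fun x => R ^ 2 - ‖x - x0‖ ^ 2 with hη
    have hηc : Continuous η := by fun_prop
    have hcont : Continuous (fun x => η x * u x) := hηc.mul hu.continuous
    obtain ⟨y, hyR, hy⟩ := (isCompact_closedBall x0 R).exists_isMaxOn
      ⟨x0, Metric.mem_closedBall_self (by linarith)⟩ hcont.continuousOn
    rw [Metric.mem_closedBall, dist_eq_norm] at hyR
    have hyx0 : R ^ 2 * u x0 ≤ η y * u y := by
      have : η x0 * u x0 ≤ η y * u y := hy (Metric.mem_closedBall_self (by linarith))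
      simpa [hη] using this
    rcases le_or_gt (η y * u y) 0 with hle | hpos
    · have : u x0 = 0 := by
        have h1 : 0 < R ^ 2 := by positivity
        have h2 : R ^ 2 * u x0 ≤ 0 := hyx0.trans hle
        exact le_antisymm (nonpos_of_mul_nonpos_right h2 h1) (h0 x0)
      rw [this]; nlinarith
    have hη0 : 0 ≤ η y := by simp only [hη]; nlinarith [norm_nonneg (y - x0)]
    have hηy : 0 < η y := by
      rcases hη0.eq_or_lt with h | h
      · rw [← h] at hpos; simp at hpos
      · exact h
    have huy : 0 < u y := by
      rcases (h0 y).eq_or_lt with h | h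
      · rw [← h] at hpos; simp at hpos
      · exact h
    have hyR' : ‖y - x0‖ < R := by
      simp only [hη] at hηy; nlinarith [norm_nonneg (y - x0)]
    have hloc : IsLocalMax (fun x => η x * u x) y :=
      hy.isLocalMax (Filter.mem_of_superset
        (Metric.isOpen_ball.mem_nhds (by simpa [dist_eq_norm] using hyR'))
        Metric.ball_subset_closedBall)
    set z := y - x0 with hz
    -- The first and second derivative tests along the `i`-th coordinate line.
    have hi : ∀ i : Fin n, η y ^ 2 * fderiv ℝ (fun w => fderiv ℝ u w (EuclideanSpace.single i 1)) y
        (EuclideanSpace.single i 1) ≤ 2 * (η y * u y) + 8 * z i ^ 2 * u y := by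
      intro i
      set e : EuclideanSpace ℝ (Fin n) := EuclideanSpace.single i 1 with he
      have hline : ∀ t : ℝ, η (y + t • e) = η y - 2 * t * z i - t ^ 2 := by
        intro t
        have h1 : y + t • e - x0 = z + t • e := by rw [hz]; abel
        simp only [hη]
        rw [h1, he, norm_sq_line]; ring
      have hq : ∀ t : ℝ, HasDerivAt (fun t : ℝ => η (y + t • e)) (-2 * z i - 2 * t) t := by
        intro t
        simp only [hline]
        have := ((((hasDerivAt_id' t).const_mul 2).mul_const (z i)).const_sub (η y)).sub
          (hasDerivAt_pow 2 t)
        exact this.congr_deriv (by norm_num)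
      have hq' : HasDerivAt (fun t : ℝ => -2 * z i - 2 * t) (-2) 0 := by
        simpa using ((hasDerivAt_id (0:ℝ)).const_mul 2).const_sub (-2 * z i)
      have hg := fun t => (hq t).mul (hasDerivAt_line hu y e t)
      have hg' := (hq'.mul (hasDerivAt_line hu y e 0)).add
        ((hq 0).mul (hasDerivAt_line2 hu y e 0))
      have hl := hloc.line e
      have t1 := hl.hasDerivAt_eq_zero (hg 0)
      have t2 := second_deriv_nonpos hg hg' hl
      simp only [zero_smul, add_zero, mul_zero, sub_zero] at t1 t2
      set a := fderiv ℝ u y e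
      set d := fderiv ℝ (fun w => fderiv ℝ u w e) y e
      have t3 : η y * a = 2 * z i * u y := by linarith
      have t4 : η y * (η y * d) ≤ η y * (2 * u y + 4 * z i * a) :=
        mul_le_mul_of_nonneg_left (by linarith) hη0
      have t5 : η y * (2 * u y + 4 * z i * a) = 2 * (η y * u y) + 8 * z i ^ 2 * u y := by
        linear_combination (4 * z i) * t3
      nlinarith
    have hsum : η y ^ 2 * lap n u y ≤ 2 * n * (η y * u y) + 8 * ‖z‖ ^ 2 * u y := by
      unfold lap
      rw [Finset.mul_sum]
      refine (Finset.sum_le_sum fun i _ => hi i).trans (le_of_eq ?_)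
      rw [Finset.sum_add_distrib, ← Finset.sum_mul, ← Finset.sum_mul, ← Finset.mul_sum, sum_sq_eq,
        Finset.sum_const, Finset.card_univ, Fintype.card_fin, nsmul_eq_mul]
      ring
    have hl := mul_le_mul_of_nonneg_left (hlap y) (sq_nonneg (η y))
    have h1 : u y * (η y ^ 2 * (u y ^ 2 - 1)) ≤ u y * (2 * n * η y + 8 * ‖z‖ ^ 2) := by
      nlinarith
    have h2 := le_of_mul_le_mul_left h1 huy
    have hηR : η y ≤ R ^ 2 := by simp only [hη]; nlinarith [sq_nonneg ‖y - x0‖]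
    have hzR : ‖z‖ ^ 2 ≤ R ^ 2 := by gcongr
    have h3 : (η y * u y) ^ 2 ≤ R ^ 4 + (2 * n + 8) * R ^ 2 := by
      have e1 : η y ^ 2 ≤ (R ^ 2) ^ 2 := by gcongr
      have e2 : n * η y ≤ n * R ^ 2 := by gcongr
      nlinarith
    have h4 : (R ^ 2 * u x0) ^ 2 ≤ (η y * u y) ^ 2 := by
      have := h0 x0
      gcongr
    have h5 : R ^ 2 * (R ^ 2 * (u x0 ^ 2 - 1)) ≤ R ^ 2 * (2 * n + 8) := by nlinarith
    exact le_of_mul_le_mul_left h5 (by positivity)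
  by_contra hcon
  push Not at hcon
  have hp : 0 < u x0 ^ 2 - 1 := by nlinarith
  have hn : (0 : ℝ) ≤ n := n.cast_nonneg
  have := key (1 + (2 * n + 8) / (u x0 ^ 2 - 1)) (by
    have : 0 ≤ (2 * (n:ℝ) + 8) / (u x0 ^ 2 - 1) := by positivity
    linarith)
  set q := (2 * (n:ℝ) + 8) / (u x0 ^ 2 - 1) with hq
  have hq0 : 0 < q := by positivity
  have hqe : q * (u x0 ^ 2 - 1) = 2 * n + 8 := by rw [hq]; field_simp
  nlinarith [mul_pos hq0 hp, mul_pos (mul_pos hq0 hq0) hp]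

/-- Interior gradient bound: the odd part of `w` in the `i`-th variable about `x₀` is compared with
the barrier `2B‖z‖² + K zᵢ - K zᵢ²` on the half ball `‖z‖ ≤ 1`, `zᵢ ≥ 0`. -/
lemma coordDeriv_le {n : ℕ} {w : EuclideanSpace ℝ (Fin n) → ℝ} (hw : ContDiff ℝ 2 w) {B F : ℝ}
    (hB : ∀ x, |w x| ≤ B) (hF : ∀ x, |lap n w x| ≤ F) (x0 : EuclideanSpace ℝ (Fin n))
    (i : Fin n) :
    fderiv ℝ w x0 (EuclideanSpace.single i 1) ≤ 2 * B * n + F + 1 := by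
  set K := 2 * B * n + F + 1 with hK
  have hn : (0 : ℝ) ≤ n := n.cast_nonneg
  have hB0 : 0 ≤ B := (abs_nonneg _).trans (hB x0)
  have hF0 : 0 ≤ F := (abs_nonneg _).trans (hF x0)
  have hK0 : 0 < K := by positivity
  set e : EuclideanSpace ℝ (Fin n) := EuclideanSpace.single i 1 with he
  -- `P` is `x₀` plus the reflection in the hyperplane `zᵢ = 0`.
  set P : EuclideanSpace ℝ (Fin n) → EuclideanSpace ℝ (Fin n) :=
    fun z => x0 + (z - (2 * z i) • e) with hP
  have hPC : ContDiff ℝ 2 P := by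
    have : ContDiff ℝ 2 (fun z : EuclideanSpace ℝ (Fin n) => z i) := by fun_prop
    rw [hP]; fun_prop
  have hwP : ContDiff ℝ 2 (fun z => w (P z)) := hw.comp hPC
  have hlapP : ∀ z, lap n (fun z => w (P z)) z = lap n w (P z) := by
    intro z
    -- Along the `j`-th line, `P` moves with speed `s j = ±1`.
    set s : Fin n → ℝ := fun j => if j = i then -1 else 1 with hs
    have hs2 : ∀ j, s j * s j = 1 := by intro j; simp only [hs]; split_ifs <;> norm_num
    have hline : ∀ (j : Fin n) (t : ℝ), P (z + t • EuclideanSpace.single j (1 : ℝ))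
        = P z + (t * s j) • EuclideanSpace.single j (1 : ℝ) := by
      intro j t
      by_cases hj : j = i
      · subst hj
        simp only [hP, hs, he, if_true]
        ext k
        by_cases hk : k = j
        · subst hk; simp; ring
        · simp [hk]
      · simp only [hP, hs, he, if_neg hj]
        ext k
        simp [Ne.symm hj]
        ring
    have hts : ∀ (j : Fin n) (t : ℝ), HasDerivAt (fun t : ℝ => t * s j) (s j) t := by
      intro j t
      simpa using (hasDerivAt_id t).mul_const (s j)
    rw [lap_eq_of_line hwP z
      (fun j => fderiv ℝ (fun y => fderiv ℝ w y (EuclideanSpace.single j 1))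
        (P z + ((0 : ℝ) * s j) • EuclideanSpace.single j (1 : ℝ)) (EuclideanSpace.single j 1)
        * s j * s j)
      (fun j t => fderiv ℝ w (P z + (t * s j) • EuclideanSpace.single j (1 : ℝ))
        (EuclideanSpace.single j 1) * s j)]
    · unfold lap
      refine Finset.sum_congr rfl fun j _ => ?_
      rw [mul_assoc, hs2]
      simp
    · intro j t
      simp only [hline]
      exact (hasDerivAt_line hw (P z) _ (t * s j)).comp t (hts j t)
    · intro j
      exact ((hasDerivAt_line2 hw (P z) _ ((0:ℝ) * s j)).comp (0:ℝ) (hts j 0)).mul_const (s j)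
  have hw0 : ContDiff ℝ 2 (fun z => w (z + x0)) := hw.comp (contDiff_id.add contDiff_const)
  set φ : EuclideanSpace ℝ (Fin n) → ℝ := fun z => w (z + x0) - w (P z) with hφ
  have hφC : ContDiff ℝ 2 φ := hw0.sub hwP
  have hφlap : ∀ z, -(2 * F) ≤ lap n φ z := by
    intro z
    rw [hφ, lap_sub hw0 hwP, hlapP, lap_shift]
    have h1 := abs_le.mp (hF (z + x0))
    have h2 := abs_le.mp (hF (P z))
    linarith [h1.1, h2.2]
  set ψ : EuclideanSpace ℝ (Fin n) → ℝ :=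
    fun z => 2 * B * ‖z‖ ^ 2 + K * z i - K * z i ^ 2 with hψ
  have hψC : ContDiff ℝ 2 ψ := by
    have h1 : ContDiff ℝ 2 (fun z : EuclideanSpace ℝ (Fin n) => z i) := by fun_prop
    have h2 : ContDiff ℝ 2 (fun z : EuclideanSpace ℝ (Fin n) => ‖z‖ ^ 2) :=
      contDiff_id.norm_sq ℝ
    rw [hψ]; fun_prop
  have hψlap : ∀ z, lap n ψ z = 4 * B * n - 2 * K := by
    intro z
    set r : Fin n → ℝ := fun j => if j = i then 1 else 0 with hr
    have hline : ∀ (j : Fin n) (t : ℝ), ψ (z + t • EuclideanSpace.single j (1 : ℝ))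
        = ψ z + (2 * B * (2 * z j) + K * r j - K * (2 * z i * r j)) * t
          + (2 * B - K * r j ^ 2) * t ^ 2 := by
      intro j t
      simp only [hψ, norm_sq_line]
      by_cases hj : j = i
      · subst hj; simp [hr]; ring
      · simp [hr, hj, Ne.symm hj]; ring
    rw [lap_eq_of_line hψC z (fun j => (2 * B - K * r j ^ 2) * 2)
      (fun j t => (2 * B * (2 * z j) + K * r j - K * (2 * z i * r j))
          + (2 * B - K * r j ^ 2) * (2 * t))]
    · rw [← Finset.sum_mul, Finset.sum_sub_distrib]
      simp [hr]
      ring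
    · intro j t
      simp only [hline]
      have := (((hasDerivAt_id' t).const_mul
        (2 * B * (2 * z j) + K * r j - K * (2 * z i * r j))).const_add (ψ z)).add
        ((hasDerivAt_pow 2 t).const_mul (2 * B - K * r j ^ 2))
      exact this.congr_deriv (by norm_num)
    · intro j
      have := (((hasDerivAt_id' (0:ℝ)).const_mul 2).const_mul (2 * B - K * r j ^ 2)).const_add
        (2 * B * (2 * z j) + K * r j - K * (2 * z i * r j))
      exact this.congr_deriv (by norm_num)
  have hcoord : ∀ z : EuclideanSpace ℝ (Fin n), |z i| ≤ ‖z‖ := fun z => by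
    simpa using PiLp.norm_apply_le z i
  have hcmp : ∀ z : EuclideanSpace ℝ (Fin n), ‖z‖ ≤ 1 → 0 ≤ z i → φ z ≤ ψ z := by
    have hiC : Continuous (fun z : EuclideanSpace ℝ (Fin n) => z i) := by fun_prop
    have hcomp : IsCompact (Metric.closedBall (0 : EuclideanSpace ℝ (Fin n)) 1 ∩ {z | 0 ≤ z i}) :=
      (isCompact_closedBall _ _).inter_right (isClosed_le continuous_const hiC)
    have hcont : Continuous (fun z => φ z - ψ z) := hφC.continuous.sub hψC.continuous
    obtain ⟨z, ⟨hz1, hzi⟩, hz⟩ := hcomp.exists_isMaxOn ⟨0, by simp⟩ hcont.continuousOn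
    suffices hle : φ z - ψ z ≤ 0 by
      intro x hx hxi
      have : φ x - ψ x ≤ φ z - ψ z := hz ⟨by simpa using hx, hxi⟩
      linarith
    by_contra hpos
    push Not at hpos
    have hzn : ‖z‖ ≤ 1 := by simpa using hz1
    have hzi0 : 0 ≤ z i := hzi
    have hzi1 : z i ≤ 1 := (le_abs_self _).trans ((hcoord z).trans hzn)
    have hzi' : 0 < z i := by
      refine lt_of_le_of_ne hzi0 fun heq => ?_
      have h1 : φ z = 0 := by simp [hφ, hP, ← heq, add_comm]
      have h2 : 0 ≤ ψ z := by simp only [hψ, ← heq]; ring_nf; positivity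
      linarith
    have hzn' : ‖z‖ < 1 := by
      refine lt_of_le_of_ne hzn fun heq => ?_
      have h1 : φ z ≤ 2 * B := by
        have h1 := abs_le.mp (hB (z + x0))
        have h2 := abs_le.mp (hB (P z))
        simp only [hφ]; linarith [h1.2, h2.1]
      have h2 : 2 * B ≤ ψ z := by
        simp only [hψ, heq]
        nlinarith [mul_nonneg hK0.le (mul_nonneg hzi0 (sub_nonneg.mpr hzi1))]
      linarith
    have hnh : Metric.closedBall (0 : EuclideanSpace ℝ (Fin n)) 1 ∩ {z | 0 ≤ z i} ∈ nhds z := by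
      refine Filter.inter_mem (Filter.mem_of_superset
        (Metric.isOpen_ball.mem_nhds (by simpa using hzn')) Metric.ball_subset_closedBall) ?_
      exact Filter.mem_of_superset ((isOpen_lt continuous_const hiC).mem_nhds hzi')
        fun x (hx : 0 < x i) => hx.le
    have h1 := lap_le_of_isLocalMax hφC hψC (hz.isLocalMax hnh)
    rw [hψlap] at h1
    have h2 := hφlap z
    linarith
  -- Differentiate the comparison `φ ≤ ψ` at the origin in direction `e`.
  have hd : HasDerivAt (fun t : ℝ => w (x0 + t • e) - w (x0 + t • (-e)))
      (fderiv ℝ w x0 e + fderiv ℝ w x0 e) 0 := by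
    have h1 := (hasDerivAt_line hw x0 e 0).sub (hasDerivAt_line hw x0 (-e) 0)
    exact h1.congr_deriv (by simp)
  have hT := hd.tendsto_slope_zero_right
  have hT2 : Tendsto (fun t : ℝ => 2 * B * t + K) (nhdsWithin 0 (Set.Ioi 0)) (nhds K) := by
    have : Continuous (fun t : ℝ => 2 * B * t + K) := by fun_prop
    have h := (this.tendsto 0).mono_left (nhdsWithin_le_nhds (s := Set.Ioi (0:ℝ)))
    simpa using h
  have hle := le_of_tendsto_of_tendsto hT hT2 (by
    filter_upwards [Ioo_mem_nhdsGT (show (0:ℝ) < 1 by norm_num)] with t ht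
    have h1 := hcmp (t • e) (by simp [he, norm_smul, abs_of_pos ht.1, ht.2.le])
      (by simp [he, ht.1.le])
    have e1 : P (t • e) = x0 + t • (-e) := by
      simp only [hP, he]
      ext k
      by_cases hk : k = i
      · subst hk; simp; ring
      · simp [hk]
    have e2 : ψ (t • e) = 2 * B * t ^ 2 + K * t - K * t ^ 2 := by
      simp [hψ, he, norm_smul]
    have e3 : φ (t • e) = w (x0 + t • e) - w (x0 + t • (-e)) := by
      simp only [hφ, e1]; rw [add_comm]
    rw [e2, e3] at h1
    simp only [zero_add, zero_smul, add_zero, sub_self, sub_zero, smul_eq_mul]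
    rw [inv_mul_le_iff₀ ht.1]
    nlinarith [ht.1, mul_pos hK0 (mul_pos ht.1 ht.1)])
  have hp : 0 ≤ K := hK0.le
  linarith

lemma exists_lipschitz {n : ℕ} {w : EuclideanSpace ℝ (Fin n) → ℝ} (hw : ContDiff ℝ 2 w) {B F : ℝ}
    (hB : ∀ x, |w x| ≤ B) (hF : ∀ x, |lap n w x| ≤ F) :
    ∃ L : ℝ, 0 < L ∧ ∀ x y, |w x - w y| ≤ L * ‖x - y‖ := by
  have hB0 : 0 ≤ B := (abs_nonneg _).trans (hB 0)
  have hF0 : 0 ≤ F := (abs_nonneg _).trans (hF 0)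
  have hn : (0 : ℝ) ≤ n := n.cast_nonneg
  set K := 2 * B * n + F + 1 with hK
  have hK0 : 0 < K := by positivity
  have hneg : ContDiff ℝ 2 (fun x => -w x) := hw.neg
  have hlapneg : ∀ x, lap n (fun x => -w x) x = -lap n w x := by
    intro x
    have := lap_const_mul hw (-1) x
    simpa using this
  have hpart : ∀ x i, |fderiv ℝ w x (EuclideanSpace.single i 1)| ≤ K := by
    intro x i
    have h1 := coordDeriv_le hw hB hF x i
    have h2 := coordDeriv_le hneg (B := B) (F := F) (by simpa using hB)
      (fun x => by rw [hlapneg, abs_neg]; exact hF x) x i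
    rw [fderiv_fun_neg] at h2
    simp only [_root_.neg_apply] at h2
    exact abs_le.mpr ⟨by linarith, h1⟩
  have hop : ∀ x, ‖fderiv ℝ w x‖ ≤ n * K + 1 := by
    intro x
    refine ContinuousLinearMap.opNorm_le_bound _ (by positivity) fun v => ?_
    have hv : v = ∑ i, v i • EuclideanSpace.single i (1 : ℝ) := by
      ext k
      simp [Pi.single_apply]
    have h1 : fderiv ℝ w x v = ∑ i, v i * fderiv ℝ w x (EuclideanSpace.single i 1) := by
      conv_lhs => rw [hv]
      simp [map_sum]
    rw [h1]
    calc ‖∑ i, v i * fderiv ℝ w x (EuclideanSpace.single i 1)‖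
        ≤ ∑ i : Fin n, ‖v‖ * K := by
          refine (norm_sum_le _ _).trans (Finset.sum_le_sum fun i _ => ?_)
          rw [norm_mul]
          exact mul_le_mul (PiLp.norm_apply_le v i) (hpart x i) (norm_nonneg _) (norm_nonneg _)
      _ = n * K * ‖v‖ := by simp; ring
      _ ≤ (n * K + 1) * ‖v‖ := by nlinarith [norm_nonneg v]
  refine ⟨n * K + 1, by positivity, fun x y => ?_⟩
  have := convex_univ.norm_image_sub_le_of_norm_fderiv_le (f := w) (x := y) (y := x)
    (fun z _ => (hw.differentiable (by norm_num)) z) (fun z _ => hop z) trivial trivial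
  simpa using this

/-! ### Algebra of the nonlinearity -/

lemma exists_far_consts {Λ : ℝ} (hΛ : 1 < Λ) : ∃ ε δ : ℝ, 0 < ε ∧ ε < 1 ∧ 0 < δ ∧
    δ ≤ Λ * (1 - ε) ^ 2 - 1 - 2 * Λ * ε ∧ δ ≤ 3 * (1 - ε) ^ 2 - 1 - 2 * Λ * ε := by
  obtain ⟨k, hk⟩ : ∃ k : ℝ, k = (Λ - 1) / Λ := ⟨_, rfl⟩
  have hΛ0 : 0 < Λ := by linarith
  have hkΛ : k * Λ = Λ - 1 := by rw [hk]; field_simp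
  have hk0 : 0 < k := by rw [hk]; exact div_pos (by linarith) hΛ0
  have hk1 : k < 1 := by nlinarith
  obtain ⟨ε, hε⟩ : ∃ ε : ℝ, ε = k / (16 * Λ) := ⟨_, rfl⟩
  have hεΛ : Λ * ε = k / 16 := by rw [hε]; field_simp
  have hε0 : 0 < ε := by rw [hε]; positivity
  have hε1 : ε < 1 / 16 := by nlinarith
  have hsq : 1 - 2 * ε ≤ (1 - ε) ^ 2 := by nlinarith
  refine ⟨ε, k / 2, hε0, by linarith, by linarith, ?_, ?_⟩
  · nlinarith
  · nlinarith

/-- If `(a, b)` is near the state `(0, 1)`, the difference `c - a` of first components satisfies a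
coercive differential inequality where it is negative and not above `b - d`. -/
lemma far_fst {Λ ε δ a b c d : ℝ} (hΛ : 1 < Λ)
    (hδ : δ ≤ Λ * (1 - ε) ^ 2 - 1 - 2 * Λ * ε) (hε1 : ε < 1)
    (ha0 : 0 ≤ a) (hc0 : 0 ≤ c) (hb0 : 0 ≤ b) (hd0 : 0 ≤ d) (hb1 : b ≤ 1) (hd1 : d ≤ 1)
    (ha : a < ε) (hb : 1 - ε < b) (hU : c - a < 0) (hUV : c - a ≤ b - d) :
    -(δ * (c - a)) ≤ (c - c ^ 3 - Λ * c * d ^ 2) - (a - a ^ 3 - Λ * a * b ^ 2) := by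
  have hid : (c - c ^ 3 - Λ * c * d ^ 2) - (a - a ^ 3 - Λ * a * b ^ 2)
      = (c - a) * (1 - (c ^ 2 + c * a + a ^ 2) - Λ * b ^ 2) + Λ * (c * (b + d) * (b - d)) := by
    ring
  have h1 : 2 * ε * (c - a) ≤ c * (b + d) * (b - d) := by
    rcases le_total 0 (b - d) with h | h
    · have : 0 ≤ c * (b + d) * (b - d) := by positivity
      nlinarith
    · have h2 : c * (b + d) ≤ ε * 2 :=
        mul_le_mul (by linarith) (by linarith) (by linarith) (by linarith)
      nlinarith
  have h2 : (1 - ε) ^ 2 ≤ b ^ 2 := by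
    have : 0 ≤ 1 - ε := by linarith
    gcongr
  have h3 : 1 - (c ^ 2 + c * a + a ^ 2) - Λ * b ^ 2 ≤ -δ - 2 * Λ * ε := by
    have : 0 ≤ c ^ 2 + c * a + a ^ 2 := by positivity
    nlinarith
  have h4 := mul_le_mul_of_nonpos_left h3 hU.le
  have h5 := mul_le_mul_of_nonneg_left h1 (by linarith : 0 ≤ Λ)
  rw [hid]
  nlinarith

/-- The counterpart of `far_fst` for the difference `b - d` of second components. -/
lemma far_snd {Λ ε δ a b c d : ℝ} (hΛ : 1 < Λ)
    (hδ : δ ≤ 3 * (1 - ε) ^ 2 - 1 - 2 * Λ * ε) (hε1 : ε < 1)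
    (ha0 : 0 ≤ a) (hc0 : 0 ≤ c) (hd0 : 0 ≤ d) (hd1 : d ≤ 1)
    (ha : a < ε) (hb : 1 - ε < b) (hV : b - d < 0) (hVU : b - d ≤ c - a) :
    -(δ * (b - d)) ≤ (b - b ^ 3 - Λ * b * a ^ 2) - (d - d ^ 3 - Λ * d * c ^ 2) := by
  have hid : (b - b ^ 3 - Λ * b * a ^ 2) - (d - d ^ 3 - Λ * d * c ^ 2)
      = (b - d) * (1 - (b ^ 2 + b * d + d ^ 2) - Λ * a ^ 2) + Λ * (d * (a + c) * (c - a)) := by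
    ring
  have h1 : 2 * ε * (b - d) ≤ d * (a + c) * (c - a) := by
    rcases le_total 0 (c - a) with h | h
    · have : 0 ≤ d * (a + c) * (c - a) := by positivity
      nlinarith
    · have h2 : d * (a + c) ≤ 1 * (2 * ε) :=
        mul_le_mul hd1 (by linarith) (by linarith) (by linarith)
      nlinarith
  have hε' : 0 ≤ 1 - ε := by linarith
  have h2 : (1 - ε) * (1 - ε) ≤ b * b := mul_le_mul hb.le hb.le hε' (by linarith)
  have h2' : (1 - ε) * (1 - ε) ≤ b * d :=
    mul_le_mul hb.le (by linarith) hε' (by linarith)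
  have h2'' : (1 - ε) * (1 - ε) ≤ d * d :=
    mul_le_mul (by linarith) (by linarith) hε' (by linarith)
  have h3 : 1 - (b ^ 2 + b * d + d ^ 2) - Λ * a ^ 2 ≤ -δ - 2 * Λ * ε := by
    have : 0 ≤ Λ * a ^ 2 := by positivity
    nlinarith
  have h4 := mul_le_mul_of_nonpos_left h3 hV.le
  have h5 := mul_le_mul_of_nonneg_left h1 (by linarith : 0 ≤ Λ)
  rw [hid]
  nlinarith

/-- For ordered states `(a, b)`, `(c, d)` in the unit square, the coupling term has a sign. -/
lemma super_alg {Λ a b c d : ℝ} (hΛ : 1 < Λ) (ha0 : 0 ≤ a) (ha1 : a ≤ 1) (hc0 : 0 ≤ c)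
    (hc1 : c ≤ 1) (hb0 : 0 ≤ b) (hd0 : 0 ≤ d) (hd1 : d ≤ 1) (hac : a ≤ c) (hdb : d ≤ b) :
    -((2 + Λ) * (c - a)) ≤ (c - c ^ 3 - Λ * c * d ^ 2) - (a - a ^ 3 - Λ * a * b ^ 2) := by
  have hid : (c - c ^ 3 - Λ * c * d ^ 2) - (a - a ^ 3 - Λ * a * b ^ 2)
      = (c - a) * (1 - (c ^ 2 + c * a + a ^ 2) - Λ * d ^ 2) + Λ * a * (b + d) * (b - d) := by
    ring
  have h1 : 0 ≤ Λ * a * (b + d) * (b - d) :=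
    mul_nonneg (by positivity) (by linarith)
  have h2 : -(2 + Λ) ≤ 1 - (c ^ 2 + c * a + a ^ 2) - Λ * d ^ 2 := by
    have : c ^ 2 ≤ 1 := by nlinarith
    have : c * a ≤ 1 := by nlinarith
    have : a ^ 2 ≤ 1 := by nlinarith
    have : d ^ 2 ≤ 1 := by nlinarith
    nlinarith
  have h3 := mul_le_mul_of_nonneg_left h2 (sub_nonneg.mpr hac)
  rw [hid]
  nlinarith

lemma abs_rhs_le {Λ a b : ℝ} (hΛ : 1 < Λ) (ha0 : 0 ≤ a) (ha1 : a ≤ 1) (hb0 : 0 ≤ b)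
    (hb1 : b ≤ 1) : |a - a ^ 3 - Λ * a * b ^ 2| ≤ 1 + Λ := by
  have h1 : a ^ 3 ≤ 1 := pow_le_one₀ ha0 ha1
  have h2 : 0 ≤ a ^ 3 := by positivity
  have h3 : a * b ^ 2 ≤ 1 := mul_le_one₀ ha1 (by positivity) (pow_le_one₀ hb0 hb1)
  have h4 : 0 ≤ a * b ^ 2 := by positivity
  rw [abs_le]
  constructor <;> nlinarith

/-! ### Increments in the last variable -/

/-- If the increments of `w` over a step `τ` are nonnegative supersolutions, then they are bounded
below on the slab `|x_N| ≤ M`: summing them along the `x_N`-direction gives at least `1 / 2`, so one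
of boundedly many is not small, and positivity propagates from there. -/
lemma increment_pos {N : ℕ} {w : EuclideanSpace ℝ (Fin (N + 1)) → ℝ} (hw : ContDiff ℝ 2 w)
    {L : ℝ} (hL : 0 < L) (hLip : ∀ x y, |w x - w y| ≤ L * ‖x - y‖) {M₁ : ℝ}
    (htop : ∀ x, M₁ ≤ x (Fin.last N) → 3 / 4 < w x)
    (hbot : ∀ x, x (Fin.last N) ≤ -M₁ → w x < 1 / 4) {τ C : ℝ} (hτ : 0 < τ) (hC : 0 ≤ C)
    (hpos : ∀ x, 0 ≤ w (x + τ • EuclideanSpace.single (Fin.last N) 1) - w x)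
    (hlap : ∀ x, lap (N + 1)
        (fun x => w (x + τ • EuclideanSpace.single (Fin.last N) 1) - w x) x
      ≤ C * (w (x + τ • EuclideanSpace.single (Fin.last N) 1) - w x)) (M : ℝ) :
    ∃ c : ℝ, 0 < c ∧ ∀ x, |x (Fin.last N)| ≤ M →
      c ≤ w (x + τ • EuclideanSpace.single (Fin.last N) 1) - w x := by
  set e : EuclideanSpace ℝ (Fin (N + 1)) := EuclideanSpace.single (Fin.last N) 1 with he
  have hen : ‖e‖ = 1 := by simp [he]
  have hel : ∀ (x : EuclideanSpace ℝ (Fin (N + 1))) (t : ℝ),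
      (x + t • e) (Fin.last N) = x (Fin.last N) + t := by intro x t; simp [he]
  obtain ⟨J, hJ⟩ : ∃ J : ℕ, (M + M₁) / τ ≤ J ∧ 0 < J := by
    obtain ⟨J, hJ⟩ := exists_nat_ge ((M + M₁) / τ)
    exact ⟨J + 1, by push_cast; linarith, by omega⟩
  obtain ⟨hJM, hJ0⟩ := hJ
  have hJ0' : (0 : ℝ) < J := by exact_mod_cast hJ0
  rw [div_le_iff₀ hτ] at hJM
  set c0 : ℝ := 1 / (4 * J) with hc0
  have hc0p : 0 < c0 := by positivity
  obtain ⟨ω, hω, hprop⟩ := exists_propagation (N + 1) (C := C) (c := c0 / 2)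
    (ρ := c0 / (4 * L)) (R := J * τ) hC (by positivity) (by positivity) (by positivity)
  refine ⟨ω, hω, fun x hx => ?_⟩
  obtain ⟨hx1, hx2⟩ := abs_le.mp hx
  set g : ℕ → ℝ := fun j => w (x + (((j : ℝ) - J) * τ) • e) with hg
  obtain ⟨j, hj, hjc⟩ : ∃ j ∈ Finset.range (2 * J), c0 ≤ g (j + 1) - g j := by
    by_contra hcon
    push Not at hcon
    have h1 : ∑ j ∈ Finset.range (2 * J), (g (j + 1) - g j) ≤ ∑ j ∈ Finset.range (2 * J), c0 :=
      Finset.sum_le_sum fun j hj => (hcon j hj).le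
    rw [Finset.sum_range_sub] at h1
    have h2 : ∑ j ∈ Finset.range (2 * J), c0 = 1 / 2 := by
      rw [Finset.sum_const, Finset.card_range, nsmul_eq_mul, hc0]
      push_cast
      field_simp
      norm_num
    have h3 : 3 / 4 < g (2 * J) := by
      apply htop; rw [hel]; push_cast; linarith
    have h4 : g 0 < 1 / 4 := by
      apply hbot; rw [hel]; push_cast; linarith
    linarith
  set y := x + (((j : ℝ) - J) * τ) • e with hy
  have hgj : g (j + 1) = w (y + τ • e) := by
    simp only [hg, hy]
    congr 1
    push_cast
    rw [add_assoc, ← add_smul]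
    congr 2
    ring
  have hjc' : c0 ≤ w (y + τ • e) - w y := by rw [← hgj]; exact hjc
  have hWC : ContDiff ℝ 2 (fun x => w (x + τ • e) - w x) :=
    (hw.comp (contDiff_id.add contDiff_const)).sub hw
  refine hprop _ hWC hpos hlap y (fun z hz => ?_) x ?_
  · have h1 := abs_le.mp (hLip (z + τ • e) (y + τ • e))
    have h2 := abs_le.mp (hLip z y)
    rw [add_sub_add_right_eq_sub] at h1
    have h3 : L * ‖z - y‖ ≤ c0 / 4 := by
      calc L * ‖z - y‖ ≤ L * (c0 / (4 * L)) := by gcongr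
        _ = c0 / 4 := by field_simp
    linarith [h1.1, h2.2]
  · have : x - y = -((((j : ℝ) - J) * τ) • e) := by rw [hy]; abel
    rw [this, norm_neg, norm_smul, hen, mul_one, Real.norm_eq_abs, abs_mul, abs_of_pos hτ]
    have hj2 : (j : ℝ) ≤ 2 * J := by
      have := (Finset.mem_range.mp hj).le
      exact_mod_cast this
    have hj3 : (0 : ℝ) ≤ j := j.cast_nonneg
    gcongr
    rw [abs_le]; constructor <;> linarith

/-- If all increments of `w` in `x_N` are nonnegative supersolutions, then `∂_N w > 0`: the
difference quotients are bounded below, uniformly in the step, by propagation from a point where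
`∂_N w > 0`. -/
lemma lastDeriv_pos {N : ℕ} {w : EuclideanSpace ℝ (Fin (N + 1)) → ℝ} (hw : ContDiff ℝ 2 w)
    {M₁ : ℝ} (htop : ∀ x, M₁ ≤ x (Fin.last N) → 3 / 4 < w x)
    (hbot : ∀ x, x (Fin.last N) ≤ -M₁ → w x < 1 / 4) {C : ℝ} (hC : 0 ≤ C)
    (hpos : ∀ τ : ℝ, 0 ≤ τ → ∀ x,
      0 ≤ w (x + τ • EuclideanSpace.single (Fin.last N) 1) - w x)
    (hlap : ∀ τ : ℝ, 0 ≤ τ → ∀ x, lap (N + 1)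
        (fun x => w (x + τ • EuclideanSpace.single (Fin.last N) 1) - w x) x
      ≤ C * (w (x + τ • EuclideanSpace.single (Fin.last N) 1) - w x)) :
    ∀ x, 0 < fderiv ℝ w x (EuclideanSpace.single (Fin.last N) 1) := by
  set e : EuclideanSpace ℝ (Fin (N + 1)) := EuclideanSpace.single (Fin.last N) 1 with he
  have hen : ‖e‖ = 1 := by simp [he]
  obtain ⟨y, hy⟩ : ∃ y, 0 < fderiv ℝ w y e := by
    by_contra hcon
    push Not at hcon
    have hd : ∀ t, HasDerivAt (fun t : ℝ => w (0 + t • e)) (fderiv ℝ w (0 + t • e) e) t :=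
      hasDerivAt_line hw 0 e
    have hanti : Antitone (fun t : ℝ => w (0 + t • e)) :=
      antitone_of_deriv_nonpos (fun t => (hd t).differentiableAt)
        fun t => by rw [(hd t).deriv]; exact hcon _
    have h1 := hanti (neg_le_self (abs_nonneg M₁))
    have h2 := htop (0 + |M₁| • e) (by simp [he, le_abs_self])
    have h3 := hbot (0 + (-|M₁|) • e) (by simp [he, le_abs_self])
    simp only at h1
    linarith
  have hDc : Continuous (fun z => fderiv ℝ w z e) := (contDiff_dir hw e).continuous
  set c := fderiv ℝ w y e / 2 with hc
  have hc0 : 0 < c := by positivity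
  obtain ⟨r, hr, hball⟩ := Metric.mem_nhds_iff.mp
    ((isOpen_lt continuous_const hDc).mem_nhds (show c < fderiv ℝ w y e by linarith))
  intro x
  obtain ⟨ω, hω, hprop⟩ := exists_propagation (N + 1) (C := C) (c := c)
    (ρ := r / 2) (R := ‖x - y‖) hC hc0 (by positivity) (norm_nonneg _)
  have key : ∀ τ : ℝ, 0 < τ → τ < r / 2 → ω ≤ τ⁻¹ * (w (x + τ • e) - w x) := by
    intro τ hτ hτr
    have hWC : ContDiff ℝ 2 (fun x => w (x + τ • e) - w x) :=
      (hw.comp (contDiff_id.add contDiff_const)).sub hw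
    refine hprop (fun x => τ⁻¹ * (w (x + τ • e) - w x)) (contDiff_const.mul hWC)
      (fun x => mul_nonneg (by positivity) (hpos τ hτ.le x)) (fun x => ?_) y (fun z hz => ?_)
      x le_rfl
    · rw [lap_const_mul hWC]
      have := mul_le_mul_of_nonneg_left (hlap τ hτ.le x) (inv_pos.mpr hτ).le
      linarith
    · have hd : ∀ t, HasDerivAt (fun t : ℝ => w (z + t • e)) (fderiv ℝ w (z + t • e) e) t :=
        hasDerivAt_line hw z e
      obtain ⟨t, ht, hteq⟩ := exists_hasDerivAt_eq_slope (fun t : ℝ => w (z + t • e)) _ hτ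
        (fun t _ => (hd t).continuousAt.continuousWithinAt) (fun t _ => hd t)
      have hin : z + t • e ∈ Metric.ball y r := by
        rw [Metric.mem_ball, dist_eq_norm]
        have h1 : z + t • e - y = (z - y) + t • e := by abel
        have h2 : ‖t • e‖ = t := by
          rw [norm_smul, hen, mul_one, Real.norm_eq_abs, abs_of_pos ht.1]
        rw [h1]
        have h3 := norm_add_le (z - y) (t • e)
        linarith [ht.2]
      have h4 : c < fderiv ℝ w (z + t • e) e := hball hin
      rw [hteq] at h4
      simp only [zero_smul, add_zero, sub_zero] at h4
      rw [inv_mul_eq_div]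
      exact h4.le
  have hT := (hasDerivAt_line hw x e 0).tendsto_slope_zero_right
  have hge : ω ≤ fderiv ℝ w (x + (0 : ℝ) • e) e := by
    refine ge_of_tendsto hT ?_
    filter_upwards [Ioo_mem_nhdsGT (show (0:ℝ) < r / 2 by positivity)] with t ht
    simpa using key t ht.1 ht.2
  rw [zero_smul, add_zero] at hge
  linarith

lemma lap_increment {N : ℕ} {w : EuclideanSpace ℝ (Fin N) → ℝ} (hw : ContDiff ℝ 2 w)
    (a x : EuclideanSpace ℝ (Fin N)) :
    lap N (fun x => w (x + a) - w x) x = lap N w (x + a) - lap N w x := by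
  rw [lap_sub (f := fun x => w (x + a)) (hw.comp (contDiff_id.add contDiff_const)) hw, lap_shift]

/-! ### The sliding argument -/

/-- Proposition 3.1: monotonicity in `x_N` under `(h∞)`. -/
theorem stmt_13 (N : ℕ) (Λ : ℝ) (hΛ : 1 < Λ)
    (u v : EuclideanSpace ℝ (Fin (N + 1)) → ℝ)
    (hsol : IsSolution (N + 1) Λ u v)
    (hu : ∀ x, 0 ≤ u x) (hv : ∀ x, 0 ≤ v x)
    (hinf : Hinf N u v) :
    ∀ x : EuclideanSpace ℝ (Fin (N + 1)),
      0 < fderiv ℝ u x (EuclideanSpace.single (Fin.last N) 1) ∧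
      fderiv ℝ v x (EuclideanSpace.single (Fin.last N) 1) < 0 := by
  obtain ⟨huC, hvC, hueq, hveq⟩ := hsol
  obtain ⟨hinf1, hinf2⟩ := hinf
  have hΛ0 : 0 < Λ := by linarith
  have hu1 : ∀ x, u x ≤ 1 := le_one_of_subsolution huC hu fun x => by
    have h1 : 0 ≤ Λ * u x * v x ^ 2 := mul_nonneg (mul_nonneg hΛ0.le (hu x)) (sq_nonneg _)
    linarith [hueq x]
  have hv1 : ∀ x, v x ≤ 1 := le_one_of_subsolution hvC hv fun x => by
    have h1 : 0 ≤ Λ * u x ^ 2 * v x := mul_nonneg (mul_nonneg hΛ0.le (sq_nonneg _)) (hv x)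
    linarith [hveq x]
  -- With `w = 1 - v` the system becomes cooperative, and both components should increase.
  set w : EuclideanSpace ℝ (Fin (N + 1)) → ℝ := fun x => 1 - v x with hw
  have hwC : ContDiff ℝ 2 w := contDiff_const.sub hvC
  have hulap : ∀ x, lap (N + 1) u x = -(u x - u x ^ 3 - Λ * u x * v x ^ 2) := fun x => by
    linarith [hueq x]
  have hwlap : ∀ x, lap (N + 1) w x = v x - v x ^ 3 - Λ * v x * u x ^ 2 := fun x => by
    rw [hw, lap_sub contDiff_const hvC, lap_const]
    linarith [hveq x]
  obtain ⟨Lu, hLu, hLipu⟩ := exists_lipschitz huC (B := 1) (F := 1 + Λ)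
    (fun x => by rw [abs_of_nonneg (hu x)]; exact hu1 x)
    (fun x => by rw [hulap, abs_neg]; exact abs_rhs_le hΛ (hu x) (hu1 x) (hv x) (hv1 x))
  obtain ⟨Lw, hLw, hLipw⟩ := exists_lipschitz hwC (B := 1) (F := 1 + Λ)
    (fun x => by simp only [hw, abs_le]; constructor <;> linarith [hv x, hv1 x])
    (fun x => by rw [hwlap]; exact abs_rhs_le hΛ (hv x) (hv1 x) (hu x) (hu1 x))
  set e : EuclideanSpace ℝ (Fin (N + 1)) := EuclideanSpace.single (Fin.last N) 1 with he
  have hen : ‖e‖ = 1 := by simp [he]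
  have hel : ∀ (x : EuclideanSpace ℝ (Fin (N + 1))) (t : ℝ),
      (x + t • e) (Fin.last N) = x (Fin.last N) + t := by intro x t; simp [he]
  -- Thresholds: `M` for the coercivity of the linearization, `M₁` for crude bounds.
  have hthr : ∀ ε : ℝ, 0 < ε → ∃ M : ℝ, 0 ≤ M ∧
      (∀ x : EuclideanSpace ℝ (Fin (N + 1)), M ≤ x (Fin.last N) → 1 - ε < u x ∧ v x < ε) ∧
      (∀ x : EuclideanSpace ℝ (Fin (N + 1)), x (Fin.last N) ≤ -M → u x < ε ∧ 1 - ε < v x) := by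
    intro ε hε
    obtain ⟨a, ha⟩ := hinf1 ε hε
    obtain ⟨b, hb⟩ := hinf2 ε hε
    refine ⟨max |a| |b|, (abs_nonneg a).trans (le_max_left _ _), fun x hx => ?_, fun x hx => ?_⟩
    · have h := ha x ((le_abs_self a).trans ((le_max_left _ _).trans hx))
      exact ⟨by linarith [(abs_lt.mp h.1).1], (abs_lt.mp h.2).2⟩
    · have h := hb x (by linarith [le_max_right |a| |b|, neg_abs_le b])
      exact ⟨(abs_lt.mp h.1).2, by linarith [(abs_lt.mp h.2).1]⟩
  obtain ⟨ε, δ, hε, hε1, hδ, hE1, hE2⟩ := exists_far_consts hΛ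
  obtain ⟨M, hM0, hMtop, hMbot⟩ := hthr ε hε
  obtain ⟨M₁, -, hM₁top, hM₁bot⟩ := hthr (1 / 4) (by norm_num)
  set U : ℝ → EuclideanSpace ℝ (Fin (N + 1)) → ℝ := fun τ x => u (x + τ • e) - u x with hU
  set W : ℝ → EuclideanSpace ℝ (Fin (N + 1)) → ℝ := fun τ x => w (x + τ • e) - w x with hW
  have hWv : ∀ τ x, W τ x = v x - v (x + τ • e) := fun τ x => by simp only [hW, hw]; ring
  have hUC : ∀ τ, ContDiff ℝ 2 (U τ) := fun τ =>
    (huC.comp (contDiff_id.add contDiff_const)).sub huC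
  have hWC : ∀ τ, ContDiff ℝ 2 (W τ) := fun τ =>
    (hwC.comp (contDiff_id.add contDiff_const)).sub hwC
  -- Only the slab `-M < x_N < M - τ` has to be controlled by hand.
  have slide : ∀ τ : ℝ, (∀ x : EuclideanSpace ℝ (Fin (N + 1)), -M < x (Fin.last N) →
      x (Fin.last N) + τ < M → 0 ≤ U τ x ∧ 0 ≤ W τ x) → ∀ x, 0 ≤ U τ x ∧ 0 ≤ W τ x := by
    intro τ hτ
    refine pair_nonneg (hUC τ) (hWC τ) (B := 1) hδ
      (fun x => by simp only [hU]; linarith [hu (x + τ • e), hu1 x])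
      (fun x => by rw [hWv]; linarith [hv x, hv1 (x + τ • e)]) ?_ ?_
    · intro x hneg hle
      have hl : lap (N + 1) (U τ) x = _ := lap_increment huC (τ • e) x
      rw [hl, hulap, hulap]
      rw [hWv] at hle
      simp only [hU] at hneg hle ⊢
      rcases le_or_gt (x (Fin.last N)) (-M) with hx | hx
      · have h := hMbot x hx
        have := far_fst hΛ hE1 hε1 (hu x) (hu (x + τ • e)) (hv x) (hv (x + τ • e)) (hv1 x)
          (hv1 (x + τ • e)) h.1 h.2 hneg hle
        linarith
      rcases le_or_gt M (x (Fin.last N) + τ) with hx' | hx'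
      · have h := hMtop (x + τ • e) (by rw [hel]; exact hx')
        have := far_snd hΛ hE2 hε1 (hv (x + τ • e)) (hv x) (hu x) (hu1 x) h.2 h.1 hneg hle
        linarith
      · have := (hτ x hx hx').1
        simp only [hU] at this
        linarith
    · intro x hneg hle
      have hl : lap (N + 1) (W τ) x = _ := lap_increment hwC (τ • e) x
      rw [hl, hwlap, hwlap]
      rw [hWv] at hneg hle ⊢
      simp only [hU] at hle
      rcases le_or_gt (x (Fin.last N)) (-M) with hx | hx
      · have h := hMbot x hx
        have := far_snd hΛ hE2 hε1 (hu x) (hu (x + τ • e)) (hv (x + τ • e))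
          (hv1 (x + τ • e)) h.1 h.2 hneg hle
        linarith
      rcases le_or_gt M (x (Fin.last N) + τ) with hx' | hx'
      · have h := hMtop (x + τ • e) (by rw [hel]; exact hx')
        have := far_fst hΛ hE1 hε1 (hv (x + τ • e)) (hv x) (hu (x + τ • e)) (hu x)
          (hu1 (x + τ • e)) (hu1 x) h.2 h.1 hneg hle
        linarith
      · have := (hτ x hx hx').2
        rw [hWv] at this
        linarith
  have hsuperU : ∀ τ, (∀ x, 0 ≤ U τ x ∧ 0 ≤ W τ x) → ∀ x,
      lap (N + 1) (U τ) x ≤ (2 + Λ) * U τ x := by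
    intro τ hτ x
    have hl : lap (N + 1) (U τ) x = _ := lap_increment huC (τ • e) x
    have h := hτ x
    rw [hWv] at h
    rw [hl, hulap, hulap]
    simp only [hU] at h ⊢
    have := super_alg hΛ (hu x) (hu1 x) (hu (x + τ • e)) (hu1 _) (hv x) (hv (x + τ • e))
      (hv1 _) (by linarith [h.1]) (by linarith [h.2])
    linarith
  have hsuperW : ∀ τ, (∀ x, 0 ≤ U τ x ∧ 0 ≤ W τ x) → ∀ x,
      lap (N + 1) (W τ) x ≤ (2 + Λ) * W τ x := by
    intro τ hτ x
    have hl : lap (N + 1) (W τ) x = _ := lap_increment hwC (τ • e) x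
    have h := hτ x
    rw [hWv] at h
    rw [hl, hwlap, hwlap, hWv]
    simp only [hU] at h
    have := super_alg hΛ (hv (x + τ • e)) (hv1 _) (hv x) (hv1 _) (hu (x + τ • e)) (hu x)
      (hu1 _) (by linarith [h.2]) (by linarith [h.1])
    linarith
  have hutop : ∀ x : EuclideanSpace ℝ (Fin (N + 1)), M₁ ≤ x (Fin.last N) → 3 / 4 < u x :=
    fun x hx => by linarith [(hM₁top x hx).1]
  have hubot : ∀ x : EuclideanSpace ℝ (Fin (N + 1)), x (Fin.last N) ≤ -M₁ → u x < 1 / 4 :=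
    fun x hx => (hM₁bot x hx).1
  have hwtop : ∀ x : EuclideanSpace ℝ (Fin (N + 1)), M₁ ≤ x (Fin.last N) → 3 / 4 < w x :=
    fun x hx => by simp only [hw]; linarith [(hM₁top x hx).2]
  have hwbot : ∀ x : EuclideanSpace ℝ (Fin (N + 1)), x (Fin.last N) ≤ -M₁ → w x < 1 / 4 :=
    fun x hx => by simp only [hw]; linarith [(hM₁bot x hx).2]
  -- A good positive step can be decreased a little.
  have hopen : ∀ τ, 0 < τ → (∀ x, 0 ≤ U τ x ∧ 0 ≤ W τ x) →
      ∃ r > 0, ∀ τ', 0 ≤ τ' → |τ' - τ| < r → ∀ x, 0 ≤ U τ' x ∧ 0 ≤ W τ' x := by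
    intro τ hτ hgood
    obtain ⟨cu, hcu, hcu'⟩ := increment_pos huC hLu hLipu hutop hubot hτ
      (by linarith : 0 ≤ 2 + Λ) (fun x => (hgood x).1) (hsuperU τ hgood) M
    obtain ⟨cw, hcw, hcw'⟩ := increment_pos hwC hLw hLipw hwtop hwbot hτ
      (by linarith : 0 ≤ 2 + Λ) (fun x => (hgood x).2) (hsuperW τ hgood) M
    refine ⟨min (cu / Lu) (cw / Lw), lt_min (by positivity) (by positivity), ?_⟩
    intro τ' hτ' hlt
    have hdist : ∀ x : EuclideanSpace ℝ (Fin (N + 1)),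
        ‖(x + τ • e) - (x + τ' • e)‖ = |τ' - τ| := by
      intro x
      rw [add_sub_add_left_eq_sub, ← sub_smul, norm_smul, hen, mul_one, Real.norm_eq_abs,
        abs_sub_comm]
    have h1 : |τ' - τ| * Lu < cu := (lt_div_iff₀ hLu).mp (hlt.trans_le (min_le_left _ _))
    have h2 : |τ' - τ| * Lw < cw := (lt_div_iff₀ hLw).mp (hlt.trans_le (min_le_right _ _))
    refine slide τ' fun x hx1 hx2 => ?_
    have hxM : |x (Fin.last N)| ≤ M := abs_le.mpr ⟨hx1.le, by linarith⟩
    have a1 := (abs_le.mp (hLipu (x + τ • e) (x + τ' • e))).2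
    have a2 := (abs_le.mp (hLipw (x + τ • e) (x + τ' • e))).2
    rw [hdist] at a1 a2
    have b1 := hcu' x hxM
    have b2 := hcw' x hxM
    simp only [hU, hW]
    constructor <;> linarith
  -- The set of `τ ≥ 0` such that all steps `≥ τ` are good.
  set T : Set ℝ := {τ | 0 ≤ τ ∧ ∀ τ', τ ≤ τ' → ∀ x, 0 ≤ U τ' x ∧ 0 ≤ W τ' x} with hT
  have hTne : T.Nonempty := by
    refine ⟨2 * M, by positivity, fun τ' hτ' => slide τ' fun x hx1 hx2 => ?_⟩
    linarith
  have hTbdd : BddBelow T := ⟨0, fun τ hτ => hτ.1⟩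
  set s := sInf T with hs
  have hs0 : 0 ≤ s := le_csInf hTne fun τ hτ => hτ.1
  have hgt : ∀ τ', s < τ' → ∀ x, 0 ≤ U τ' x ∧ 0 ≤ W τ' x := by
    intro τ' hτ'
    obtain ⟨τ, hτT, hlt⟩ := exists_lt_of_csInf_lt hTne hτ'
    exact hτT.2 τ' hlt.le
  have hsgood : ∀ x, 0 ≤ U s x ∧ 0 ≤ W s x := by
    intro x
    have hcu : Continuous (fun τ => U τ x) := by
      have := huC.continuous
      simp only [hU]; fun_prop
    have hcw : Continuous (fun τ => W τ x) := by
      have := hwC.continuous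
      simp only [hW]; fun_prop
    have hev : ∀ᶠ τ in nhdsWithin s (Set.Ioi s), s < τ := self_mem_nhdsWithin
    exact ⟨ge_of_tendsto ((hcu.tendsto s).mono_left nhdsWithin_le_nhds)
        (hev.mono fun τ hτ => (hgt τ hτ x).1),
      ge_of_tendsto ((hcw.tendsto s).mono_left nhdsWithin_le_nhds)
        (hev.mono fun τ hτ => (hgt τ hτ x).2)⟩
  have hs_eq : s = 0 := by
    by_contra hne
    have hspos : 0 < s := lt_of_le_of_ne hs0 (Ne.symm hne)
    obtain ⟨r, hr, hrgood⟩ := hopen s hspos hsgood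
    set τ₀ := max 0 (s - r / 2) with hτ₀
    have hτ₀s : τ₀ < s := max_lt hspos (by linarith)
    have hmem : τ₀ ∈ T := by
      refine ⟨le_max_left _ _, fun τ' hτ' => ?_⟩
      rcases le_or_gt τ' s with h | h
      · refine hrgood τ' ((le_max_left _ _).trans hτ') ?_
        have : s - r / 2 ≤ τ' := (le_max_right _ _).trans hτ'
        rw [abs_lt]; constructor <;> linarith
      · exact hgt τ' h
    exact absurd (csInf_le hTbdd hmem) (not_le.mpr hτ₀s)
  have hall : ∀ τ, 0 ≤ τ → ∀ x, 0 ≤ U τ x ∧ 0 ≤ W τ x := by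
    intro τ hτ
    rcases hτ.eq_or_lt with h | h
    · rw [hs_eq] at hsgood
      rw [← h]; exact hsgood
    · exact hgt τ (by rw [hs_eq]; exact h)
  intro x
  refine ⟨lastDeriv_pos huC hutop hubot (by linarith : 0 ≤ 2 + Λ)
    (fun τ hτ x => (hall τ hτ x).1) (fun τ hτ => hsuperU τ (hall τ hτ)) x, ?_⟩
  have h := lastDeriv_pos hwC hwtop hwbot (by linarith : 0 ≤ 2 + Λ)
    (fun τ hτ x => (hall τ hτ x).2) (fun τ hτ => hsuperW τ (hall τ hτ)) x
  rw [hw, fderiv_const_sub] at h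
  simpa using h
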